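/- arXiv:2604.22752 — 3 statements merged into one kernel-verified Lean document; each statement's English description precedes it below -/
import Mathlib

section
/- Let Ω be a measurable space, B a probability measure on Ω, d a natural number, t : Ω → (Fin d → ℝ) a measurable map, and η ∈ (Fin d → ℝ). Assume x ↦ exp(⟨η, t(x)⟩) is integrable with respect to B with positive integral Z, and let P be the probability measure with density x ↦ exp(⟨η, t(x)⟩)/Z with respect to B; suppose t is integrable with respect to P. Let Q be a probability measure on Ω with Q ≪ B, t integrable with respect to Q, ∫ t dQ = ∫ t dP, and KL(Q‖B) < ∞. If KL(Q‖B) = KL(P‖B), then Q = P. -/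
open MeasureTheory Real
open scoped Classical

/-- Kullback–Leibler divergence of `Q` with respect to `P`:
`∫ log(dQ/dP) dQ` if `Q ≪ P` and the integrand is `Q`-integrable, `+∞` otherwise. -/
noncomputable def klDiv {Ω : Type*} [MeasurableSpace Ω] (Q P : Measure Ω) : EReal :=
  if Q ≪ P ∧ Integrable (fun x => Real.log (Q.rnDeriv P x).toReal) Q
    then ((∫ x, Real.log (Q.rnDeriv P x).toReal ∂Q : ℝ) : EReal)
    else ⊤

/-!
With `P = B.tilted f`, the chain rule for densities reads
`klDiv Q P = klDiv Q B + (log ∫ exp f ∂B - ∫ f ∂Q)`, also when `klDiv Q B = ⊤`. The bracket depends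
on `Q` only through `∫ f ∂Q`, so if `∫ f ∂Q = ∫ f ∂P`, then `klDiv Q B ≤ klDiv P B` forces
`klDiv Q P ≤ klDiv P P = 0`, and the equality case of Gibbs' inequality gives `Q = P`.
-/

section KLDiv

variable {Ω : Type*} [MeasurableSpace Ω] {μ ν : Measure Ω}

lemma klDiv_of_ac_of_integrable (hμν : μ ≪ ν) (hint : Integrable (llr μ ν) μ) :
    klDiv μ ν = ((∫ x, llr μ ν x ∂μ : ℝ) : EReal) :=
  if_pos ⟨hμν, hint⟩

lemma klDiv_eq_top_of_not (h : ¬(μ ≪ ν ∧ Integrable (llr μ ν) μ)) : klDiv μ ν = ⊤ :=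
  if_neg h

lemma klDiv_eq_coe_informationTheory_klDiv [IsFiniteMeasure μ] [IsFiniteMeasure ν]
    (huniv : μ Set.univ = ν Set.univ) :
    klDiv μ ν = (InformationTheory.klDiv μ ν : EReal) := by
  by_cases h : μ ≪ ν ∧ Integrable (llr μ ν) μ
  · rw [klDiv_of_ac_of_integrable h.1 h.2,
      ← InformationTheory.toReal_klDiv_of_measure_eq h.1 huniv,
      EReal.coe_ennreal_toReal (InformationTheory.klDiv_ne_top h.1 h.2)]
  · rw [klDiv_eq_top_of_not h,
      InformationTheory.klDiv_eq_top_iff.2 (not_and.1 h), EReal.coe_ennreal_top]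

lemma klDiv_nonpos_iff [IsFiniteMeasure μ] [IsFiniteMeasure ν]
    (huniv : μ Set.univ = ν Set.univ) : klDiv μ ν ≤ 0 ↔ μ = ν := by
  rw [klDiv_eq_coe_informationTheory_klDiv huniv, ← EReal.coe_ennreal_zero,
    EReal.coe_ennreal_le_coe_ennreal_iff, nonpos_iff_eq_zero,
    InformationTheory.klDiv_eq_zero_iff]

end KLDiv

section Tilted

variable {Ω : Type*} [MeasurableSpace Ω] {μ ν : Measure Ω} {f : Ω → ℝ}

lemma sigmaFinite_of_integrable_exp (hf : Integrable (fun x => exp (f x)) μ) :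
    SigmaFinite μ := by
  have hdens : AEMeasurable (fun x => ENNReal.ofReal (exp (f x))) μ :=
    hf.aemeasurable.ennreal_ofReal
  have hpos : ∀ x, ENNReal.ofReal (exp (f x)) ≠ 0 := fun x =>
    (ENNReal.ofReal_pos.2 (exp_pos _)).ne'
  have : IsFiniteMeasure (μ.withDensity fun x => ENNReal.ofReal (exp (f x))) :=
    isFiniteMeasure_withDensity_ofReal hf.2
  rw [← withDensity_inv_same₀ hdens (ae_of_all _ hpos) (ae_of_all _ fun _ => ENNReal.ofReal_ne_top)]
  exact SigmaFinite.withDensity_of_ne_top (ae_of_all _ fun x => ENNReal.inv_ne_top.2 (hpos x))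

lemma integrable_llr_tilted_right_iff [IsFiniteMeasure μ] [SigmaFinite ν] (hμν : μ ≪ ν)
    (hfμ : Integrable f μ) (hfν : Integrable (fun x => exp (f x)) ν) :
    Integrable (llr μ (ν.tilted f)) μ ↔ Integrable (llr μ ν) μ := by
  rw [integrable_congr (llr_tilted_right hμν hfν)]
  exact integrable_add_iff_integrable_right' (hfμ.neg.add (integrable_const _))

lemma klDiv_tilted_right [IsProbabilityMeasure μ] (hfμ : Integrable f μ)
    (hfν : Integrable (fun x => exp (f x)) ν) :
    klDiv μ (ν.tilted f) =
      klDiv μ ν + ((log (∫ x, exp (f x) ∂ν) - ∫ x, f x ∂μ : ℝ) : EReal) := by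
  have := sigmaFinite_of_integrable_exp hfν
  have hac : μ ≪ ν.tilted f ↔ μ ≪ ν :=
    ⟨fun h => h.trans (tilted_absolutelyContinuous ν f),
      fun h => h.trans (absolutelyContinuous_tilted hfν)⟩
  have hiff : μ ≪ ν.tilted f ∧ Integrable (llr μ (ν.tilted f)) μ ↔
      μ ≪ ν ∧ Integrable (llr μ ν) μ := by
    rw [hac]
    exact and_congr_right fun h => integrable_llr_tilted_right_iff h hfμ hfν
  by_cases h : μ ≪ ν ∧ Integrable (llr μ ν) μ
  · obtain ⟨hac', hint'⟩ := hiff.2 h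
    rw [klDiv_of_ac_of_integrable hac' hint', klDiv_of_ac_of_integrable h.1 h.2,
      integral_llr_tilted_right h.1 hfμ hfν h.2, ← EReal.coe_add]
    congr 1
    ring
  · rw [klDiv_eq_top_of_not h, klDiv_eq_top_of_not (mt hiff.1 h), EReal.top_add_coe]

lemma eq_tilted_of_klDiv_le [NeZero ν] [IsProbabilityMeasure μ]
    (hfν : Integrable (fun x => exp (f x)) ν) (hfμ : Integrable f μ)
    (hftilted : Integrable f (ν.tilted f))
    (hmean : ∫ x, f x ∂(ν.tilted f) ≤ ∫ x, f x ∂μ)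
    (hle : klDiv μ ν ≤ klDiv (ν.tilted f) ν) :
    μ = ν.tilted f := by
  have := isProbabilityMeasure_tilted hfν
  rw [← klDiv_nonpos_iff (by simp only [measure_univ])]
  calc klDiv μ (ν.tilted f)
    _ = klDiv μ ν + ((log (∫ x, exp (f x) ∂ν) - ∫ x, f x ∂μ : ℝ) : EReal) :=
      klDiv_tilted_right hfμ hfν
    _ ≤ klDiv (ν.tilted f) ν +
        ((log (∫ x, exp (f x) ∂ν) - ∫ x, f x ∂(ν.tilted f) : ℝ) : EReal) :=
      add_le_add hle (EReal.coe_le_coe_iff.2 (sub_le_sub_left hmean _))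
    _ = klDiv (ν.tilted f) (ν.tilted f) := (klDiv_tilted_right hftilted hfν).symm
    _ ≤ 0 := (klDiv_nonpos_iff rfl).2 rfl

end Tilted

theorem expFamily_maximises_entropy_with_prior_unique_general
    {Ω E : Type*} [MeasurableSpace Ω] [NormedAddCommGroup E] [NormedSpace ℝ E] [CompleteSpace E]
    {B : Measure Ω} [NeZero B] {t : Ω → E} (η : StrongDual ℝ E)
    (hint : Integrable (fun x => Real.exp (η (t x))) B)
    (htP : Integrable t (B.tilted fun x => η (t x)))
    {Q : Measure Ω} [IsProbabilityMeasure Q] (htQ : Integrable t Q)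
    (hmean : η (∫ x, t x ∂(B.tilted fun x => η (t x))) ≤ η (∫ x, t x ∂Q))
    (hle : klDiv Q B ≤ klDiv (B.tilted fun x => η (t x)) B) :
    Q = B.tilted fun x => η (t x) := by
  rw [← η.integral_comp_comm htP, ← η.integral_comp_comm htQ] at hmean
  exact eq_tilted_of_klDiv_le hint (η.integrable_comp htQ) (η.integrable_comp htP) hmean hle

/-- Uniqueness in the maximum-entropy characterisation: if a probability measure `Q ≪ B`
satisfies the moment constraint and achieves the same (finite) entropy with prior
measure `B` as the exponential family member `P`, then `Q = P`. -/
theorem expFamily_maximises_entropy_with_prior_unique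
    {Ω : Type*} [MeasurableSpace Ω] (B : Measure Ω) [IsProbabilityMeasure B]
    (d : ℕ) (t : Ω → (Fin d → ℝ)) (ht : Measurable t) (η : Fin d → ℝ)
    (hint : Integrable (fun x => Real.exp (∑ i, η i * t x i)) B)
    (Z : ℝ) (hZ : Z = ∫ x, Real.exp (∑ i, η i * t x i) ∂B) (hZpos : 0 < Z)
    (P : Measure Ω)
    (hP : P = B.withDensity (fun x => ENNReal.ofReal (Real.exp (∑ i, η i * t x i) / Z)))
    (hPprob : IsProbabilityMeasure P)
    (htP : Integrable t P)
    (Q : Measure Ω) [IsProbabilityMeasure Q] (hQB : Q ≪ B)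
    (htQ : Integrable t Q)
    (hmean : ∫ x, t x ∂Q = ∫ x, t x ∂P)
    (hfin : klDiv Q B < ⊤)
    (heq : klDiv Q B = klDiv P B) :
    Q = P := by
  obtain rfl : P = B.tilted fun x => η ⬝ᵥ t x := by rw [hP, hZ]; rfl
  exact expFamily_maximises_entropy_with_prior_unique_general
    (dotProductBilin ℝ ℝ η).toContinuousLinearMap hint htP htQ (congrArg _ hmean).ge heq.le
end

section
/- Let K be a nonempty finite type, d a natural number, t : K → (Fin d → ℝ), and η ∈ (Fin d → ℝ). Define p : K → ℝ by p(x) = exp(⟨η, t(x)⟩) / ∑_{y ∈ K} exp(⟨η, t(y)⟩). Let q : K → ℝ satisfy q(x) ≥ 0 for all x, ∑_{x} q(x) = 1, and ∑_{x} q(x) • t(x) = ∑_{x} p(x) • t(x). If −∑_{x} q(x) log q(x) = −∑_{x} p(x) log p(x), then q = p. -/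
/-!
Put `f x = ⟨η, t x⟩` and `Z = ∑ y, exp (f y)`, so that `log (p x) = f x - log Z`. For every
probability mass function `q` the relative entropy is therefore
`D(q ‖ p) = log Z - (∑ x, q x * f x + H(q))`, and `p` itself has `∑ x, p x * f x + H(p) = log Z`.
Since the mean of `f` is `η` applied to the mean of `t`, the constraints force `D(q ‖ p) ≤ 0`, which
is Gibbs' inequality with equality. Writing `D(q ‖ p) = ∑ x, p x * klFun (q x / p x)`, where
`klFun u = u * log u + 1 - u` is nonnegative and vanishes only at `u = 1`, gives `q = p`.
-/

open Real

section GibbsInequality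

open InformationTheory

theorem mul_klFun_div {a b : ℝ} (hab : b = 0 → a = 0) :
    b * klFun (a / b) = -negMulLog a - a * log b + b - a := by
  rcases eq_or_ne a 0 with rfl | ha
  · simp [klFun_zero]
  · have hb : b ≠ 0 := mt hab ha
    rw [klFun_apply, negMulLog, log_div ha hb]
    field_simp

variable {K : Type*} [Fintype K] {p q : K → ℝ}

theorem sum_mul_klFun_div (hpq : ∀ x, p x = 0 → q x = 0) :
    ∑ x, p x * klFun (q x / p x) =
      -∑ x, negMulLog (q x) - ∑ x, q x * log (p x) + ∑ x, p x - ∑ x, q x := by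
  simp only [mul_klFun_div (hpq _), Finset.sum_sub_distrib, Finset.sum_add_distrib,
    Finset.sum_neg_distrib]

theorem eq_of_sum_mul_klFun_div_nonpos (hp : ∀ x, 0 ≤ p x) (hq : ∀ x, 0 ≤ q x)
    (hpq : ∀ x, p x = 0 → q x = 0) (h : ∑ x, p x * klFun (q x / p x) ≤ 0) : q = p := by
  have hdiv (x : K) : 0 ≤ q x / p x := div_nonneg (hq x) (hp x)
  have hterm (x : K) : 0 ≤ p x * klFun (q x / p x) := mul_nonneg (hp x) (klFun_nonneg (hdiv x))
  have hsum : ∑ x, p x * klFun (q x / p x) = 0 := h.antisymm (Fintype.sum_nonneg hterm)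
  funext x
  rcases mul_eq_zero.mp (congrFun ((Fintype.sum_eq_zero_iff_of_nonneg hterm).mp hsum) x)
    with hpx | hkl
  · rw [hpx, hpq x hpx]
  · exact eq_of_div_eq_one ((klFun_eq_zero_iff (hdiv x)).mp hkl)

theorem eq_of_crossEntropy_le_entropy (hp : ∀ x, 0 ≤ p x) (hq : ∀ x, 0 ≤ q x)
    (hpq : ∀ x, p x = 0 → q x = 0) (hmass : ∑ x, p x ≤ ∑ x, q x)
    (h : -∑ x, q x * log (p x) ≤ ∑ x, negMulLog (q x)) : q = p := by
  refine eq_of_sum_mul_klFun_div_nonpos hp hq hpq ?_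
  rw [sum_mul_klFun_div hpq]
  linarith

end GibbsInequality

section GibbsDistribution

variable {K : Type*} [Fintype K]

/-- The Gibbs distribution on a finite type with log-weights `f`. The exponential family with
natural parameter `η` and sufficient statistic `t` is the case `f x = ⟨η, t x⟩`. -/
noncomputable def gibbsDist (f : K → ℝ) (x : K) : ℝ :=
  exp (f x) / ∑ y, exp (f y)

theorem sum_exp_pos [Nonempty K] (f : K → ℝ) : 0 < ∑ y, exp (f y) :=
  Finset.sum_pos (fun _ _ => exp_pos _) Finset.univ_nonempty

theorem gibbsDist_pos (f : K → ℝ) (x : K) : 0 < gibbsDist f x :=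
  have : Nonempty K := ⟨x⟩
  div_pos (exp_pos _) (sum_exp_pos f)

theorem sum_gibbsDist [Nonempty K] (f : K → ℝ) : ∑ x, gibbsDist f x = 1 := by
  simp only [gibbsDist, ← Finset.sum_div]
  exact div_self (sum_exp_pos f).ne'

theorem log_gibbsDist (f : K → ℝ) (x : K) :
    log (gibbsDist f x) = f x - log (∑ y, exp (f y)) := by
  have : Nonempty K := ⟨x⟩
  rw [gibbsDist, log_div (exp_ne_zero _) (sum_exp_pos f).ne', log_exp]

theorem sum_mul_log_gibbsDist (f q : K → ℝ) :
    ∑ x, q x * log (gibbsDist f x) = ∑ x, q x * f x - (∑ x, q x) * log (∑ y, exp (f y)) := by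
  simp only [log_gibbsDist, mul_sub, Finset.sum_sub_distrib, Finset.sum_mul]

theorem sum_gibbsDist_mul_add_entropy [Nonempty K] (f : K → ℝ) :
    ∑ x, gibbsDist f x * f x + ∑ x, negMulLog (gibbsDist f x) = log (∑ y, exp (f y)) := by
  simp only [negMulLog, neg_mul, Finset.sum_neg_distrib]
  rw [sum_mul_log_gibbsDist, sum_gibbsDist]
  ring

theorem eq_gibbsDist_of_log_sum_exp_le [Nonempty K] {f q : K → ℝ} (hq0 : ∀ x, 0 ≤ q x)
    (hq1 : ∑ x, q x = 1)
    (h : log (∑ y, exp (f y)) ≤ ∑ x, q x * f x + ∑ x, negMulLog (q x)) : q = gibbsDist f := by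
  refine eq_of_crossEntropy_le_entropy (fun x => (gibbsDist_pos f x).le) hq0
    (fun x hx => absurd hx (gibbsDist_pos f x).ne') (by rw [sum_gibbsDist, hq1]) ?_
  rw [sum_mul_log_gibbsDist, hq1]
  linarith

end GibbsDistribution

theorem efu_maximises_shannon_entropy_unique_general
    {K E : Type*} [Fintype K] [Nonempty K] [AddCommGroup E] [Module ℝ E]
    (t : K → E) (η : E →ₗ[ℝ] ℝ) {q : K → ℝ} (hq0 : ∀ x, 0 ≤ q x) (hq1 : ∑ x, q x = 1)
    (hmom : η (∑ x, gibbsDist (η ∘ t) x • t x) ≤ η (∑ x, q x • t x))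
    (hent : ∑ x, negMulLog (gibbsDist (η ∘ t) x) ≤ ∑ x, negMulLog (q x)) :
    q = gibbsDist (η ∘ t) := by
  have hmean (r : K → ℝ) : η (∑ x, r x • t x) = ∑ x, r x * (η ∘ t) x := by
    simp only [map_sum, map_smul, smul_eq_mul, Function.comp_apply]
  rw [hmean, hmean] at hmom
  apply eq_gibbsDist_of_log_sum_exp_le hq0 hq1
  rw [← sum_gibbsDist_mul_add_entropy]
  exact add_le_add hmom hent

/-- Uniqueness in the maximum-entropy characterisation of exponential families with
uniform base: any probability mass function with the same expectation of `t` and the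
same Shannon entropy as `p` equals `p`. -/
theorem efu_maximises_shannon_entropy_unique
    {K : Type*} [Fintype K] [Nonempty K]
    (d : ℕ) (t : K → (Fin d → ℝ)) (η : Fin d → ℝ)
    (p : K → ℝ)
    (hp : p = fun x => Real.exp (∑ i, η i * t x i) / ∑ y, Real.exp (∑ i, η i * t y i))
    (q : K → ℝ) (hq0 : ∀ x, 0 ≤ q x) (hq1 : ∑ x, q x = 1)
    (hmom : ∑ x, q x • t x = ∑ x, p x • t x)
    (hent : ∑ x, Real.negMulLog (q x) = ∑ x, Real.negMulLog (p x)) :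
    q = p := by
  subst hp
  exact efu_maximises_shannon_entropy_unique_general t (dotProductBilin ℝ ℝ η) hq0 hq1
    (congrArg _ hmom).ge hent.ge
end

section
/- Let K be a positive natural number, m : Fin K → ℕ a family of counts, not all zero, with total n = ∑_k m(k) > 0, set q(k) = m(k)/n, and let p : Fin K → ℝ satisfy p(k) > 0 for all k and ∑_k p(k) = 1. Then, as j → ∞ along the natural numbers, (1/(j·n)) · log( ((j·n)! / ∏_k (j·m(k))!) · ∏_k p(k)^{j·m(k)} ) tends to −∑_k q(k) log(q(k)/p(k)), where terms with q(k) = 0 are interpreted as 0. -/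
open Real Filter

/-!
By Stirling's formula, `log N! = N log N - N + r N` with `0 ≤ r N ≤ 1 + (log N) / 2`. In the
logarithm of the multinomial probability of counts `f` with total `N`, the linear parts of the
factorials cancel because `∑ k, f k = N`, and the `x log x` parts combine with the powers of `p` to
exactly `N * G(f / N, p)`. What remains is a bounded number of `r`-terms, hence `O(log N) = o(N)`.
-/

open scoped Nat Topology

/-- The error `log n! - (n log n - n)` of the leading-order Stirling approximation. It vanishes at
`n = 0`, where `log 0 = 0`. -/
noncomputable def stirlingError (n : ℕ) : ℝ :=
  log n ! - (n * log n - n)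

lemma stirlingError_eq_log_stirlingSeq {n : ℕ} (hn : n ≠ 0) :
    stirlingError n = log (Stirling.stirlingSeq n) + log 2 / 2 + log n / 2 := by
  have hn' : (n : ℝ) ≠ 0 := Nat.cast_ne_zero.mpr hn
  rw [stirlingError, Stirling.log_stirlingSeq_formula, log_div hn' (exp_ne_zero 1), log_exp,
    log_mul two_ne_zero hn']
  ring

lemma stirlingError_nonneg (n : ℕ) : 0 ≤ stirlingError n := by
  obtain rfl | hn := eq_or_ne n 0
  · simp [stirlingError]
  have hstirling := Stirling.le_log_factorial_stirling hn
  have hlog_n : 0 ≤ log n := log_natCast_nonneg n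
  have hlog_two_pi : 0 ≤ log (2 * π) := log_nonneg (by linarith [two_le_pi])
  rw [stirlingError]
  linarith

lemma stirlingError_le_one_add_log_div_two (n : ℕ) : stirlingError n ≤ 1 + log n / 2 := by
  obtain rfl | hn := eq_or_ne n 0
  · simp [stirlingError]
  obtain ⟨k, rfl⟩ := Nat.exists_eq_succ_of_ne_zero hn
  have hone : log (Stirling.stirlingSeq 1) = 1 - log 2 / 2 := by
    rw [Stirling.stirlingSeq_one, log_div (exp_ne_zero 1) (by positivity), log_exp,
      log_sqrt zero_le_two]
  have hanti : log (Stirling.stirlingSeq k.succ) ≤ log (Stirling.stirlingSeq 1) :=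
    Stirling.log_stirlingSeq'_antitone k.zero_le
  rw [stirlingError_eq_log_stirlingSeq hn]
  linarith

lemma stirlingError_le_one_add_log_div_two_of_le {n N : ℕ} (h : n ≤ N) :
    stirlingError n ≤ 1 + log N / 2 := by
  obtain rfl | hn := n.eq_zero_or_pos
  · have hlog : 0 ≤ log N := log_natCast_nonneg N
    simp only [stirlingError, Nat.factorial_zero, Nat.cast_zero, Nat.cast_one, log_one]
    linarith
  · have hlog : log n ≤ log N := log_le_log (mod_cast hn) (mod_cast h)
    linarith [stirlingError_le_one_add_log_div_two n]

/-- The information entropy `G(q, p)` of `q` with prior measure `p`, over the classes in `s`: the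
negative Kullback–Leibler divergence. Classes with `q k = 0` contribute `0`, and neither argument is
required to be normalised. -/
noncomputable def informationEntropy {ι : Type*} (s : Finset ι) (q p : ι → ℝ) : ℝ :=
  -∑ k ∈ s, q k * log (q k / p k)

lemma continuous_mul_log_div {b : ℝ} (hb : b ≠ 0) : Continuous fun x : ℝ ↦ x * log (x / b) := by
  have hdiv : Continuous fun x : ℝ ↦ b * (x / b * log (x / b)) :=
    (continuous_mul_log.comp (continuous_id.div_const b)).const_mul b
  refine hdiv.congr fun x ↦ ?_
  rw [← mul_assoc, mul_div_cancel₀ x hb]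

lemma mul_div_mul_log_div_div (x : ℝ) {t b : ℝ} (ht : t ≠ 0) (hb : b ≠ 0) :
    t * (x / t * log (x / t / b)) = x * log x - x * log t - x * log b := by
  obtain rfl | hx := eq_or_ne x 0
  · simp
  rw [log_div (div_ne_zero hx ht) hb, log_div hx ht, ← mul_assoc, mul_div_cancel₀ _ ht]
  ring

section FiniteClasses

variable {ι : Type*} {s : Finset ι} {p : ι → ℝ}

lemma tendsto_informationEntropy {α : Type*} {l : Filter α} {x : α → ι → ℝ} {q : ι → ℝ}
    (hp : ∀ k ∈ s, p k ≠ 0) (hx : ∀ k ∈ s, Tendsto (fun a ↦ x a k) l (𝓝 (q k))) :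
    Tendsto (fun a ↦ informationEntropy s (x a) p) l (𝓝 (informationEntropy s q p)) :=
  (tendsto_finsetSum s fun k hk ↦
    ((continuous_mul_log_div (hp k hk)).tendsto (q k)).comp (hx k hk)).neg

lemma mul_informationEntropy_div {x : ι → ℝ} {t : ℝ} (hp : ∀ k ∈ s, p k ≠ 0)
    (ht : t ≠ 0) (hx : ∑ k ∈ s, x k = t) :
    t * informationEntropy s (fun k ↦ x k / t) p =
      t * log t - ∑ k ∈ s, x k * log (x k) + ∑ k ∈ s, x k * log (p k) := by
  rw [informationEntropy, mul_neg, Finset.mul_sum,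
    Finset.sum_congr rfl fun k hk ↦ mul_div_mul_log_div_div (x k) ht (hp k hk),
    Finset.sum_sub_distrib, Finset.sum_sub_distrib, ← Finset.sum_mul, hx]
  ring

lemma log_multinomial (s : Finset ι) (f : ι → ℕ) :
    log (Nat.multinomial s f) = log (∑ k ∈ s, f k)! - ∑ k ∈ s, log (f k)! := by
  have hfactorial : ∀ k ∈ s, ((f k)! : ℝ) ≠ 0 := fun k _ ↦ by positivity
  have hmultinomial : (Nat.multinomial s f : ℝ) ≠ 0 :=
    Nat.cast_ne_zero.mpr (Nat.multinomial_pos s f).ne'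
  rw [← Nat.multinomial_spec s f, Nat.cast_mul, Nat.cast_prod,
    log_mul (Finset.prod_ne_zero_iff.mpr hfactorial) hmultinomial, log_prod hfactorial]
  ring

variable {f : ι → ℕ} {N : ℕ}

lemma log_multinomial_prob_eq (hp : ∀ k ∈ s, p k ≠ 0) (hN0 : N ≠ 0) (hN : ∑ k ∈ s, f k = N) :
    log (Nat.multinomial s f * ∏ k ∈ s, p k ^ f k) =
      N * informationEntropy s (fun k ↦ f k / N) p +
        (stirlingError N - ∑ k ∈ s, stirlingError (f k)) := by
  have hpow : ∀ k ∈ s, p k ^ f k ≠ 0 := fun k hk ↦ pow_ne_zero _ (hp k hk)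
  have hmultinomial : (Nat.multinomial s f : ℝ) ≠ 0 :=
    Nat.cast_ne_zero.mpr (Nat.multinomial_pos s f).ne'
  have hsum : ∑ k ∈ s, (f k : ℝ) = N := by rw [← hN, Nat.cast_sum]
  rw [log_mul hmultinomial (Finset.prod_ne_zero_iff.mpr hpow), log_multinomial, hN,
    log_prod hpow, mul_informationEntropy_div hp (Nat.cast_ne_zero.mpr hN0) hsum]
  simp only [log_pow, stirlingError, Finset.sum_sub_distrib, hsum]
  ring

lemma abs_log_multinomial_prob_sub_le (hp : ∀ k ∈ s, p k ≠ 0) (hN0 : N ≠ 0)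
    (hN : ∑ k ∈ s, f k = N) :
    |log (Nat.multinomial s f * ∏ k ∈ s, p k ^ f k) -
        N * informationEntropy s (fun k ↦ f k / N) p| ≤ (s.card + 1) * (1 + log N / 2) := by
  have hle : ∀ k ∈ s, f k ≤ N := fun k hk ↦ hN ▸ Finset.single_le_sum_of_canonicallyOrdered hk
  have hsum_nonneg : 0 ≤ ∑ k ∈ s, stirlingError (f k) :=
    Finset.sum_nonneg fun k _ ↦ stirlingError_nonneg (f k)
  have hsum_le : ∑ k ∈ s, stirlingError (f k) ≤ s.card * (1 + log N / 2) := by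
    simpa only [nsmul_eq_mul] using Finset.sum_le_card_nsmul s _ _ fun k hk ↦
      stirlingError_le_one_add_log_div_two_of_le (hle k hk)
  rw [log_multinomial_prob_eq hp hN0 hN, add_sub_cancel_left]
  calc |stirlingError N - ∑ k ∈ s, stirlingError (f k)|
      ≤ stirlingError N + ∑ k ∈ s, stirlingError (f k) :=
        abs_sub_le_iff.mpr ⟨by linarith, by linarith [stirlingError_nonneg N]⟩
    _ ≤ (s.card + 1) * (1 + log N / 2) := by linarith [stirlingError_le_one_add_log_div_two N]

end FiniteClasses

lemma tendsto_const_mul_one_add_log_div_two_div_natCast (C : ℝ) :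
    Tendsto (fun n : ℕ ↦ C * (1 + log n / 2) / n) atTop (𝓝 0) := by
  have hlog : (fun x : ℝ ↦ log x / 2) =o[atTop] (id : ℝ → ℝ) := by
    simpa only [div_eq_inv_mul] using isLittleO_log_id_atTop.const_mul_left 2⁻¹
  have hbound : (fun x : ℝ ↦ C * (1 + log x / 2)) =o[atTop] (id : ℝ → ℝ) :=
    ((Asymptotics.isLittleO_const_id_atTop 1).add hlog).const_mul_left C
  exact hbound.tendsto_div_nhds_zero.comp tendsto_natCast_atTop_atTop

lemma tendsto_natCast_mul_div_natCast_mul (a b : ℕ) :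
    Tendsto (fun j : ℕ ↦ ((j * a : ℕ) : ℝ) / (j * b : ℕ)) atTop (𝓝 (a / b)) := by
  refine tendsto_const_nhds.congr' ?_
  filter_upwards [eventually_ne_atTop 0] with j hj
  rw [Nat.cast_mul, Nat.cast_mul, mul_div_mul_left _ _ (Nat.cast_ne_zero.mpr hj)]

theorem log_multinomial_prob_tendsto_relative_entropy_general {ι α : Type*} {l : Filter α}
    {s : Finset ι} {f : α → ι → ℕ} {N : α → ℕ} {q p : ι → ℝ}
    (hN : ∀ a, ∑ k ∈ s, f a k = N a) (hN_top : Tendsto N l atTop)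
    (hq : ∀ k ∈ s, Tendsto (fun a ↦ (f a k : ℝ) / N a) l (𝓝 (q k))) (hp : ∀ k ∈ s, 0 < p k) :
    Tendsto (fun a ↦ 1 / (N a : ℝ) * log (Nat.multinomial s (f a) * ∏ k ∈ s, p k ^ f a k)) l
      (𝓝 (informationEntropy s q p)) := by
  have hp' : ∀ k ∈ s, p k ≠ 0 := fun k hk ↦ (hp k hk).ne'
  have hentropy : Tendsto (fun a ↦ informationEntropy s (fun k ↦ f a k / N a) p) l
      (𝓝 (informationEntropy s q p)) := tendsto_informationEntropy hp' hq
  refine hentropy.congr_dist (squeeze_zero' (.of_forall fun _ ↦ dist_nonneg) ?_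
    ((tendsto_const_mul_one_add_log_div_two_div_natCast (s.card + 1)).comp hN_top))
  filter_upwards [hN_top.eventually_gt_atTop 0] with a ha
  have hpos : (0 : ℝ) < N a := Nat.cast_pos.mpr ha
  have hscale (L G : ℝ) : G - 1 / N a * L = -((L - N a * G) / N a) := by field_simp; ring
  rw [dist_eq, hscale, abs_neg, abs_div, abs_of_pos hpos]
  exact div_le_div_of_nonneg_right (abs_log_multinomial_prob_sub_le hp' ha.ne' (hN a)) hpos.le

/-- Boltzmann's combinatorial derivation of entropy with a prior measure: the normalised
logarithm of the multinomial probability of the counts `j·m(k)` under class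
probabilities `p` tends to the negative Kullback–Leibler divergence
`−∑ₖ q(k) log(q(k)/p(k))` of the frequency vector `q(k) = m(k)/n` from `p` as `j → ∞`.
Terms with `q k = 0` vanish since they are multiplied by `q k = 0`. -/
theorem log_multinomial_prob_tendsto_relative_entropy
    (K : ℕ) (hK : 0 < K) (m : Fin K → ℕ) (hm : m ≠ 0)
    (n : ℕ) (hn : n = ∑ k, m k) (hnpos : 0 < n)
    (q : Fin K → ℝ) (hq : q = fun k => (m k : ℝ) / (n : ℝ))
    (p : Fin K → ℝ) (hp0 : ∀ k, 0 < p k) (hp1 : ∑ k, p k = 1) :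
    Tendsto
      (fun j : ℕ =>
        (1 / ((j : ℝ) * (n : ℝ))) *
          Real.log ((Nat.multinomial Finset.univ (fun k => j * m k) : ℝ) *
            ∏ k, p k ^ (j * m k)))
      atTop (nhds (-∑ k, q k * Real.log (q k / p k))) := by
  subst hq
  simpa only [Nat.cast_mul, informationEntropy] using
    log_multinomial_prob_tendsto_relative_entropy_general
      (N := fun j ↦ j * n) (fun j ↦ by rw [hn, Finset.mul_sum]) (tendsto_id.atTop_mul_const' hnpos)
      (fun k _ ↦ tendsto_natCast_mul_div_natCast_mul (m k) n) (fun k _ ↦ hp0 k)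
end
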